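/- For all positive integers i and k it holds that W_{i,k} = F_{k+1} ⌊φi⌋ + F_k (i−1); moreover w_+(i) = φ⌊φi⌋ + i − 1 and w_−(i) = φ^{−1}{φi} − 1, where {x} denotes the fractional part of x. -/

import Mathlib

/-!
Since `φ² = φ + 1`, extending a row of the Wythoff array backwards by its recurrence gives the
zeroth entry `⌊φi⌋`. Moreover `φ⌊φi⌋ = ⌊φi⌋ + i - φ⁻¹{φi}`, where `0 < φ⁻¹{φi} < 1` because `φi` is
irrational, so the first entry is `⌊φi⌋ + i - 1`. A sequence satisfying the Fibonacci recurrence is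
determined by its first two terms, and `w₊`, `w₋` are linear in them.
-/

open Real

noncomputable def phi : ℝ := (1 + Real.sqrt 5) / 2

noncomputable def W (i : ℕ) : ℕ → ℤ
  | 0 => ⌊phi ^ 2 * (⌊phi * i⌋ : ℝ)⌋ - ⌊phi * (⌊phi * i⌋ : ℝ)⌋
  | 1 => ⌊phi * (⌊phi * i⌋ : ℝ)⌋
  | 2 => ⌊phi ^ 2 * (⌊phi * i⌋ : ℝ)⌋
  | (k + 3) => W i (k + 2) + W i (k + 1)

noncomputable def wplus (i : ℕ) : ℝ := phi⁻¹ ^ 2 * (W i 1 : ℝ) + phi⁻¹ * (W i 2 : ℝ)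

noncomputable def wminus (i : ℕ) : ℝ := phi ^ 2 * (W i 1 : ℝ) - phi * (W i 2 : ℝ)

noncomputable def eta (i : ℕ) : ℝ := -(wplus i * wminus i)

open scoped goldenRatio

theorem eq_fib_nsmul_add_fib_nsmul {M : Type*} [AddCommMonoid M] {u : ℕ → M}
    (hu : ∀ k, u (k + 2) = u (k + 1) + u k) (k : ℕ) :
    u (k + 1) = Nat.fib (k + 1) • u 1 + Nat.fib k • u 0 := by
  induction k using Nat.twoStepInduction with
  | zero => simp
  | one => simp [hu 0]
  | more k ih ih' =>
    rw [hu (k + 1), ih, ih', Nat.fib_add_two (n := k + 1), Nat.fib_add_two (n := k)]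
    simp only [add_nsmul]
    abel

theorem inv_goldenRatio_eq_sub_one : φ⁻¹ = φ - 1 := by
  rw [inv_goldenRatio, ← one_sub_goldenConj, neg_sub]

theorem goldenRatio_mul_floor_goldenRatio_mul (x : ℝ) :
    φ * ⌊φ * x⌋ = ⌊φ * x⌋ + x - φ⁻¹ * Int.fract (φ * x) := by
  rw [inv_goldenRatio_eq_sub_one, Int.fract]
  linear_combination x * goldenRatio_sq

theorem floor_goldenRatio_mul_floor_goldenRatio_mul {i : ℤ} (hi : i ≠ 0) :
    ⌊φ * ⌊φ * i⌋⌋ = ⌊φ * i⌋ + i - 1 := by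
  have inv_φ_pos : 0 < φ⁻¹ := inv_pos.2 goldenRatio_pos
  have inv_φ_lt_one : φ⁻¹ < 1 := inv_lt_one_of_one_lt₀ one_lt_goldenRatio
  have fract_pos : 0 < Int.fract (φ * i) :=
    Int.fract_pos.2 ((goldenRatio_irrational.mul_intCast hi).ne_int _)
  have error_pos : 0 < φ⁻¹ * Int.fract (φ * i) := mul_pos inv_φ_pos fract_pos
  have error_lt_one : φ⁻¹ * Int.fract (φ * i) < 1 :=
    mul_lt_one_of_nonneg_of_lt_one_left inv_φ_pos.le inv_φ_lt_one (Int.fract_lt_one _).le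
  rw [goldenRatio_mul_floor_goldenRatio_mul, Int.floor_eq_iff]
  push_cast
  constructor <;> linarith

theorem phi_eq_goldenRatio : phi = φ := rfl

theorem W_add_two (i k : ℕ) : W i (k + 2) = W i (k + 1) + W i k := by
  cases k with
  | zero => simp only [W]; ring
  | succ k => rfl

theorem W_zero (i : ℕ) : W i 0 = ⌊phi * i⌋ := by
  rw [W, phi_eq_goldenRatio, goldenRatio_sq, add_one_mul, Int.floor_add_intCast,
    add_sub_cancel_left]

theorem W_one {i : ℕ} (hi : 0 < i) : W i 1 = ⌊phi * i⌋ + i - 1 := by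
  rw [W, phi_eq_goldenRatio]
  exact_mod_cast floor_goldenRatio_mul_floor_goldenRatio_mul (Int.natCast_ne_zero.2 hi.ne')

theorem W_add_one_eq_fib {i : ℕ} (hi : 0 < i) (k : ℕ) :
    W i (k + 1) = Nat.fib (k + 2) * ⌊phi * i⌋ + Nat.fib (k + 1) * ((i : ℤ) - 1) := by
  rw [eq_fib_nsmul_add_fib_nsmul (W_add_two i), W_zero, W_one hi, Nat.fib_add_two]
  simp only [nsmul_eq_mul]
  push_cast
  ring

theorem wplus_eq (i : ℕ) : wplus i = W i 1 + phi⁻¹ * W i 0 := by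
  rw [wplus, W_add_two, phi_eq_goldenRatio, inv_goldenRatio_eq_sub_one]
  push_cast
  linear_combination (W i 1 : ℝ) * goldenRatio_sq

theorem wminus_eq (i : ℕ) : wminus i = W i 1 - phi * W i 0 := by
  rw [wminus, W_add_two, phi_eq_goldenRatio]
  push_cast
  linear_combination (W i 1 : ℝ) * goldenRatio_sq

/-- `W_{i,k} = F_{k+1}⌊φi⌋ + F_k(i−1)`, with `w₊(i) = φ⌊φi⌋ + i − 1` and
`w₋(i) = φ⁻¹{φi} − 1`. -/
theorem wythoff_fib_formula (i : ℕ) (hi : 0 < i) :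
    (∀ k : ℕ, 0 < k →
        W i k = (Nat.fib (k + 1) : ℤ) * ⌊phi * (i : ℝ)⌋ + (Nat.fib k : ℤ) * ((i : ℤ) - 1)) ∧
      wplus i = phi * (⌊phi * (i : ℝ)⌋ : ℝ) + (i : ℝ) - 1 ∧
      wminus i = phi⁻¹ * Int.fract (phi * (i : ℝ)) - 1 := by
  refine ⟨fun k hk => ?_, ?_, ?_⟩
  · obtain ⟨m, rfl⟩ := Nat.exists_eq_add_one.2 hk
    exact W_add_one_eq_fib hi m
  · rw [wplus_eq, W_zero, W_one hi, phi_eq_goldenRatio, inv_goldenRatio_eq_sub_one]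
    push_cast
    ring
  · rw [wminus_eq, W_zero, W_one hi, phi_eq_goldenRatio, goldenRatio_mul_floor_goldenRatio_mul]
    push_cast
    ring
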